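/- There exists an arrangement of 8 pseudolines A and an 8-aligned graph consisting of a single edge e of alignment complexity (4,−,−) (respectively, a single 1-anchored edge that is 3-crossed, or a single 2-anchored edge that is 2-crossed) such that A is stretchable but the aligned graph has no straight-line aligned drawing. -/

import Mathlib

open Set

open scoped Classical

noncomputable section

/-- The plane. -/
abbrev Pt : Type := EuclideanSpace ℝ (Fin 2)

/-- A (topologically) planar embedded graph: vertices are points of the plane,
edges are drawn as simple arcs that pairwise intersect only in common endpoints
and pass through no other vertex. -/
structure EmbeddedGraph (V : Type) where
  pos : V → Pt
  posInj : Function.Injective pos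
  G : SimpleGraph V
  arc : ∀ ⦃u v : V⦄, G.Adj u v → Set Pt
  arc_symm : ∀ {u v : V} (h : G.Adj u v), arc h = arc h.symm
  arc_curve : ∀ {u v : V} (h : G.Adj u v), ∃ γ : ℝ → Pt,
    ContinuousOn γ (Icc 0 1) ∧ InjOn γ (Icc 0 1) ∧
    γ 0 = pos u ∧ γ 1 = pos v ∧ γ '' (Icc 0 1) = arc h
  arc_inter : ∀ {u v x y : V} (h : G.Adj u v) (h' : G.Adj x y),
    (s(u, v) : Sym2 V) ≠ s(x, y) →
      arc h ∩ arc h' ⊆ ({pos u, pos v} : Set Pt) ∩ {pos x, pos y}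
  arc_vertex : ∀ {u v : V} (h : G.Adj u v) (w : V), pos w ∈ arc h → w = u ∨ w = v

namespace EmbeddedGraph

variable {V : Type} (E : EmbeddedGraph V)

/-- The closed point set covered by the drawing of the graph. -/
def image : Set Pt := (range E.pos) ∪ ⋃ (u : V) (v : V) (h : E.G.Adj u v), E.arc h

/-- A pseudoline with respect to an embedded graph: a simple curve going to
infinity on both ends that contains each edge entirely or meets it in at most
one point. -/
def IsPseudoline (c : ℝ → Pt) : Prop :=
  Continuous c ∧ Function.Injective c ∧
    Filter.Tendsto c (Filter.cocompact ℝ) (Filter.cocompact Pt) ∧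
    ∀ {u v : V} (h : E.G.Adj u v),
      E.arc h ⊆ range c ∨ (E.arc h ∩ range c).Subsingleton

/-- An arrangement of `k` pairwise crossing pseudolines with respect to `E`. -/
def IsArrangement {k : ℕ} (A : Fin k → ℝ → Pt) : Prop :=
  (∀ i, E.IsPseudoline (A i)) ∧
    ∀ i j, i ≠ j → ∃ p : Pt, range (A i) ∩ range (A j) = {p}

/-- The open interior of an edge. -/
def arcInterior {u v : V} (h : E.G.Adj u v) : Set Pt :=
  E.arc h \ {E.pos u, E.pos v}

variable {k : ℕ} (A : Fin k → ℝ → Pt)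

/-- A vertex lying on some pseudoline. -/
def AlignedVertex (v : V) : Prop := ∃ i, E.pos v ∈ range (A i)

def FreeVertex (v : V) : Prop := ¬ E.AlignedVertex A v

/-- An edge lying entirely on some pseudoline. -/
def EdgeAligned {u v : V} (h : E.G.Adj u v) : Prop := ∃ i, E.arc h ⊆ range (A i)

/-- The pseudolines crossing the interior of an edge (not containing it). -/
def crossedSet {u v : V} (h : E.G.Adj u v) : Set (Fin k) :=
  {i | (E.arcInterior h ∩ range (A i)).Nonempty ∧ ¬ E.arc h ⊆ range (A i)}

/-- The number of endpoints of an edge anchored on (distinct) pseudolines not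
containing the edge. -/
def anchorNum {u v : V} (h : E.G.Adj u v) : ℕ :=
  if ∃ i j, i ≠ j ∧ E.pos u ∈ range (A i) ∧ E.pos v ∈ range (A j) ∧
      ¬ E.arc h ⊆ range (A i) ∧ ¬ E.arc h ⊆ range (A j) then 2
  else if (∃ i, E.pos u ∈ range (A i) ∧ ¬ E.arc h ⊆ range (A i)) ∨
      (∃ i, E.pos v ∈ range (A i) ∧ ¬ E.arc h ⊆ range (A i)) then 1
  else 0

/-- An edge is admissible for the bound `l` (`none` = this kind of edge is
forbidden, `some m` = at most `m`-crossed). -/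
def edgeOk (l : Option ℕ) {u v : V} (h : E.G.Adj u v) : Prop :=
  ∃ m, l = some m ∧ (E.crossedSet A h).ncard ≤ m

/-- Alignment complexity `(l0, l1, l2)`. -/
def HasComplexity (l0 l1 l2 : Option ℕ) : Prop :=
  ∀ {u v : V} (h : E.G.Adj u v),
    E.edgeOk A (if E.anchorNum A h = 0 then l0
      else if E.anchorNum A h = 1 then l1 else l2) h

/-- A free edge: no endpoint on a pseudoline, no interior crossing, not aligned. -/
def FreeEdge {u v : V} (h : E.G.Adj u v) : Prop :=
  E.FreeVertex A u ∧ E.FreeVertex A v ∧ E.crossedSet A h = ∅ ∧ ¬ E.EdgeAligned A h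

/-- Faces of the embedded graph. -/
def faceOf (x : Pt) : Set Pt := connectedComponentIn (E.image)ᶜ x

def IsFace (F : Set Pt) : Prop := ∃ x, x ∉ E.image ∧ F = E.faceOf x

/-- The outer (unbounded) region. -/
def outerRegion : Set Pt := {x | x ∉ E.image ∧ ¬ Bornology.IsBounded (E.faceOf x)}

def OnOuter (v : V) : Prop := E.pos v ∈ frontier E.outerRegion

def OuterEdge {u v : V} (h : E.G.Adj u v) : Prop := E.arc h ⊆ frontier E.outerRegion

def InteriorEdge {u v : V} (h : E.G.Adj u v) : Prop := ¬ E.OuterEdge h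

def IsChord {u v : V} (h : E.G.Adj u v) : Prop :=
  E.InteriorEdge h ∧ E.OnOuter u ∧ E.OnOuter v

/-- A triangulation: biconnected, all bounded faces are triangles, and the outer
face is bounded by a simple cycle. -/
def IsTriangulation : Prop :=
  E.G.Connected ∧ (∀ v : V, (E.G.comap (Subtype.val : {w : V // w ≠ v} → V)).Connected) ∧
  (∀ F : Set Pt, E.IsFace F → Bornology.IsBounded F →
    ∃ a b c : V, a ≠ b ∧ a ≠ c ∧ b ≠ c ∧ E.G.Adj a b ∧ E.G.Adj b c ∧ E.G.Adj a c ∧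
      {v : V | E.pos v ∈ frontier F} = {a, b, c}) ∧
  (∃ (v : V) (w : E.G.Walk v v), w.IsCycle ∧
    frontier E.outerRegion =
      ⋃ (x : V) (y : V) (h : E.G.Adj x y) (_ : s(x, y) ∈ w.edges), E.arc h)

/-- Proper `k`-aligned graph. -/
def Proper : Prop :=
  (∀ {u v : V} (h : E.G.Adj u v), E.EdgeAligned A h → E.crossedSet A h = ∅) ∧
  (2 ≤ k →
    (∀ {u v : V} (h : E.G.Adj u v), E.OuterEdge h → (E.crossedSet A h).ncard = 1) ∧
    (∀ i, ∃ p q : Pt, p ≠ q ∧ frontier E.outerRegion ∩ range (A i) = {p, q}) ∧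
    (∀ i j, i ≠ j → range (A i) ∩ range (A j) ∩ E.outerRegion = ∅))

/-- The set of points strictly inside a triangle of the drawing. -/
def TriInside {a b c : V} (hab : E.G.Adj a b) (hbc : E.G.Adj b c)
    (hac : E.G.Adj a c) (x : Pt) : Prop :=
  x ∉ (E.arc hab ∪ E.arc hbc ∪ E.arc hac) ∧
    Bornology.IsBounded
      (connectedComponentIn (E.arc hab ∪ E.arc hbc ∪ E.arc hac)ᶜ x)

/-- `E` has a separating triangle. -/
def HasSepTriangle : Prop :=
  ∃ (a b c : V) (hab : E.G.Adj a b) (hbc : E.G.Adj b c) (hac : E.G.Adj a c),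
    (∃ v : V, E.TriInside hab hbc hac (E.pos v)) ∧
    (∃ v : V, E.pos v ∉ (E.arc hab ∪ E.arc hbc ∪ E.arc hac) ∧
      ¬ E.TriInside hab hbc hac (E.pos v))

end EmbeddedGraph

/-- A straight line in the plane. -/
def IsLine (l : Set Pt) : Prop :=
  ∃ p d : Pt, d ≠ 0 ∧ l = {x : Pt | ∃ t : ℝ, x = p + t • d}

/-- Stretchability of a pseudoline arrangement: some homeomorphism of the plane
takes it to a line arrangement. -/
def Stretchable {k : ℕ} (A : Fin k → ℝ → Pt) : Prop :=
  ∃ (L : Fin k → Set Pt) (h : Pt ≃ₜ Pt),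
    (∀ i, IsLine (L i)) ∧ ∀ i, h '' range (A i) = L i

namespace EmbeddedGraph

variable {V : Type} (E : EmbeddedGraph V) {k : ℕ} (A : Fin k → ℝ → Pt)

/-- A straight-line aligned drawing `(Γ, L)` of the aligned graph `(E, A)`:
a homeomorphism of the plane takes vertices to `Γ`, every arc to the
corresponding straight segment, and every pseudoline to the corresponding line. -/
def IsAlignedDrawing (Γ : V → Pt) (L : Fin k → Set Pt) : Prop :=
  (∀ i, IsLine (L i)) ∧
  ∃ h : Pt ≃ₜ Pt, (∀ v : V, h (E.pos v) = Γ v) ∧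
    (∀ {u v : V} (huv : E.G.Adj u v),
      h '' E.arc huv = segment ℝ (Γ u) (Γ v)) ∧
    ∀ i, h '' range (A i) = L i

end EmbeddedGraph

/-- The union of an arrangement of curves. -/
def arrUnion {k : ℕ} (A : Fin k → ℝ → Pt) : Set Pt := ⋃ i, range (A i)

/-- A cell of the arrangement. -/
def IsCell {k : ℕ} (A : Fin k → ℝ → Pt) (C : Set Pt) : Prop :=
  ∃ x, x ∉ arrUnion A ∧ C = connectedComponentIn (arrUnion A)ᶜ x

/-- A pseudosegment of the pseudoline `A i`: a connected component of `A i`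
minus the other pseudolines. -/
def IsPseudosegment {k : ℕ} (A : Fin k → ℝ → Pt) (i : Fin k) (S : Set Pt) : Prop :=
  ∃ x, x ∈ range (A i) \ ⋃ j ∈ ({i}ᶜ : Set (Fin k)), range (A j) ∧
    S = connectedComponentIn (range (A i) \ ⋃ j ∈ ({i}ᶜ : Set (Fin k)), range (A j)) x

/-- Biconnectivity of an abstract graph. -/
def Biconnected {V : Type} (G : SimpleGraph V) : Prop :=
  G.Connected ∧ ∀ v : V, (G.comap (Subtype.val : {w : V // w ≠ v} → V)).Connected

end

/-- There is an arrangement of 8 pairwise crossing pseudolines that is stretchable,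
together with a single-edge aligned graph whose unique edge is `a`-anchored and
`c`-crossed, admitting no straight-line aligned drawing. -/
def ExistsBadSingleEdge (a c : ℕ) : Prop :=
  ∃ (E : EmbeddedGraph (Fin 2)) (A : Fin 8 → ℝ → Pt) (h : E.G.Adj 0 1),
    E.IsArrangement A ∧ Stretchable A ∧
    E.anchorNum A h = a ∧ (E.crossedSet A h).ncard = c ∧ ¬ E.EdgeAligned A h ∧
    ¬ ∃ (Γ : Fin 2 → Pt) (L : Fin 8 → Set Pt), E.IsAlignedDrawing A Γ L

/-!
Draw eight of the nine lines of the Pappus configuration straight, and let the edge run along the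
ninth one, the Pappus line through the crossings `P`, `Q`, `R`, from within a wedge at `P` to
within a wedge at `R`, dipping below `Q` into the wedge opposite to the upper one. A
homeomorphism mapping the eight lines to lines preserves, up to an exchange of the two sides, the
half-planes they bound, and by the Pappus theorem the images of `P`, `Q`, `R` are again collinear.
An affine form vanishing on the line through these images has constant signs on the images of the
wedges: it is nonnegative at both ends of the image of the edge and negative at its middle, so this
image is not a segment.
-/

open AffineMap (lineMap)

section AffineGeometry

variable {K V P : Type*} [Field K] [AddCommGroup V] [Module K V] [AddTorsor V P]

theorem eq_zero_of_mem_line {f : P →ᵃ[K] K} {x y z : P} (hx : f x = 0) (hy : f y = 0)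
    (hz : z ∈ line[K, x, y]) : f z = 0 := by
  obtain ⟨t, rfl⟩ := mem_affineSpan_pair_iff_exists_lineMap_eq.1 hz
  rw [AffineMap.apply_lineMap, hx, hy, AffineMap.lineMap_same_apply]

theorem collinear_setOf_eq_zero (hV : Module.finrank K V = 2) {f : P →ᵃ[K] K} {w : P}
    (hw : f w ≠ 0) : Collinear K {x | f x = 0} := by
  have := Module.finite_of_finrank_eq_succ hV
  rcases eq_empty_or_nonempty {x | f x = 0} with h | ⟨o, ho : f o = 0⟩
  · exact h ▸ collinear_empty K P
  have hlin : f.linear ≠ 0 := fun h => hw <| by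
    rw [← vsub_vadd w o, f.map_vadd, h, ho, LinearMap.zero_apply, zero_vadd]
  have hker : Module.finrank K f.linear.ker + 1 = Module.finrank K V :=
    Module.Dual.finrank_ker_add_one_of_ne_zero hlin
  have hspan : vectorSpan K {x | f x = 0} ≤ f.linear.ker := by
    rw [vectorSpan, Submodule.span_le]
    rintro _ ⟨x, hx : f x = 0, y, hy : f y = 0, rfl⟩
    simp [hx, hy]
  rw [collinear_iff_finrank_le_one]
  linarith [Submodule.finrank_mono hspan]

theorem vsub_eq_smul_vsub_add_smul_vsub (hV : Module.finrank K V = 2) {φ ψ : P →ᵃ[K] K}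
    {o a b : P} (hφo : φ o = 0) (hψo : ψ o = 0) (hφa : φ a = 0) (hψb : ψ b = 0)
    (hφb : φ b ≠ 0) (hψa : ψ a ≠ 0) (x : P) :
    x -ᵥ o = (ψ x / ψ a) • (a -ᵥ o) + (φ x / φ b) • (b -ᵥ o) := by
  have hφ (y : P) : φ.linear (y -ᵥ o) = φ y := by simp [hφo]
  have hψ (y : P) : ψ.linear (y -ᵥ o) = ψ y := by simp [hψo]
  have hφst (s t : K) : φ.linear (s • (a -ᵥ o) + t • (b -ᵥ o)) = t * φ b := by
    simp only [map_add, map_smul, hφ, hφa, smul_eq_mul, mul_zero, zero_add]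
  have hψst (s t : K) : ψ.linear (s • (a -ᵥ o) + t • (b -ᵥ o)) = s * ψ a := by
    simp only [map_add, map_smul, hψ, hψb, smul_eq_mul, mul_zero, add_zero]
  have hli : LinearIndependent K ![a -ᵥ o, b -ᵥ o] := by
    refine LinearIndependent.pair_iff.2 fun s t h => ⟨?_, ?_⟩
    · simpa [h, hψa] using hψst s t
    · simpa [h, hφb] using hφst s t
  have := Module.finite_of_finrank_eq_succ hV
  have hspan := hli.span_eq_top_of_card_eq_finrank' (by simp [hV])
  obtain ⟨s, t, hst⟩ : ∃ s t : K, s • (a -ᵥ o) + t • (b -ᵥ o) = x -ᵥ o := by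
    rw [← Submodule.mem_span_pair, ← Matrix.range_cons_cons_empty, hspan]
    exact Submodule.mem_top
  rw [← hφ x, ← hψ x, ← hst, hφst, hψst, mul_div_cancel_right₀ _ hφb, mul_div_cancel_right₀ _ hψa]

theorem apply_eq_div_mul_add_div_mul (hV : Module.finrank K V = 2) {f φ ψ : P →ᵃ[K] K}
    {o a b : P} (hfo : f o = 0) (hφo : φ o = 0) (hψo : ψ o = 0) (hφa : φ a = 0) (hψb : ψ b = 0)
    (hφb : φ b ≠ 0) (hψa : ψ a ≠ 0) (x : P) :
    f x = ψ x / ψ a * f a + φ x / φ b * f b := by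
  have hf (y : P) : f.linear (y -ᵥ o) = f y := by simp [hfo]
  rw [← hf x, vsub_eq_smul_vsub_add_smul_vsub hV hφo hψo hφa hψb hφb hψa x]
  simp only [map_add, map_smul, hf, smul_eq_mul]

theorem mem_line_of_smul_vsub_eq {o p q r : P} {c s t : K} (hc : c ≠ 0) (hst : s + t = c)
    (h : c • (q -ᵥ o) = s • (p -ᵥ o) + t • (r -ᵥ o)) : q ∈ line[K, p, r] := by
  refine mem_affineSpan_pair_iff_exists_lineMap_eq.2 ⟨t / c, ?_⟩
  have hq : c • ((t / c) • (r -ᵥ p)) = c • (q -ᵥ p) := by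
    rw [smul_smul, mul_div_cancel₀ _ hc, ← vsub_sub_vsub_cancel_right r p o,
      ← vsub_sub_vsub_cancel_right q p o, smul_sub c, h, ← hst]
    module
  rw [AffineMap.lineMap_apply, smul_right_injective V hc hq, vsub_vadd]

theorem smul_vsub_eq_of_mem_line_of_mem_line {o a b p : P}
    (hab : LinearIndependent K ![a -ᵥ o, b -ᵥ o]) {α β α' β' : K}
    (hp : p ∈ line[K, lineMap o a α, lineMap o b β])
    (hp' : p ∈ line[K, lineMap o a α', lineMap o b β']) :
    (α' * β - α * β') • (p -ᵥ o) =
      (α * α' * (β - β')) • (a -ᵥ o) + (β * β' * (α' - α)) • (b -ᵥ o) := by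
  have coords {α β : K} (hp : p ∈ line[K, lineMap o a α, lineMap o b β]) :
      ∃ t, p -ᵥ o = ((1 - t) * α) • (a -ᵥ o) + (t * β) • (b -ᵥ o) := by
    obtain ⟨t, rfl⟩ := mem_affineSpan_pair_iff_exists_lineMap_eq.1 hp
    refine ⟨t, ?_⟩
    simp only [AffineMap.lineMap_apply, vadd_vsub_vadd_cancel_right, vadd_vadd, vadd_vsub]
    module
  obtain ⟨t, ht⟩ := coords hp
  obtain ⟨t', ht'⟩ := coords hp'
  obtain ⟨hα, hβ⟩ := LinearIndependent.pair_iff.1 hab ((1 - t) * α - (1 - t') * α')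
    (t * β - t' * β') (by linear_combination (norm := module) ht' - ht)
  rw [ht, smul_add, smul_smul, smul_smul]
  congr 2
  · linear_combination -(α * β') * hα - α * α' * hβ
  · linear_combination β * β' * hα + β * α' * hβ

theorem pappus {o a₁ a₂ a₃ b₁ b₂ b₃ p q r : P} (ha₁ : a₁ ≠ o) (hb₂ : b₂ ∉ line[K, o, a₁])
    (ha₂ : a₂ ∈ line[K, o, a₁]) (ha₃ : a₃ ∈ line[K, o, a₁]) (hb₁ : b₁ ∈ line[K, o, b₂])
    (hb₃ : b₃ ∈ line[K, o, b₂]) (ha₂o : a₂ ≠ o) (ha₃o : a₃ ≠ o) (hb₁₃ : b₁ ≠ b₃)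
    (hp₁₂ : p ∈ line[K, a₁, b₂]) (hp₂₁ : p ∈ line[K, a₂, b₁])
    (hq₁₃ : q ∈ line[K, a₁, b₃]) (hq₃₁ : q ∈ line[K, a₃, b₁])
    (hr₂₃ : r ∈ line[K, a₂, b₃]) (hr₃₂ : r ∈ line[K, a₃, b₂]) : q ∈ line[K, p, r] := by
  have hab : LinearIndependent K ![a₁ -ᵥ o, b₂ -ᵥ o] :=
    (LinearIndependent.pair_iff' (vsub_ne_zero.2 ha₁)).2 fun t ht => hb₂ <|
      mem_affineSpan_pair_iff_exists_lineMap_eq.2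
        ⟨t, by rw [AffineMap.lineMap_apply, ht, vsub_vadd]⟩
  obtain ⟨α₂, rfl⟩ := mem_affineSpan_pair_iff_exists_lineMap_eq.1 ha₂
  obtain ⟨α₃, rfl⟩ := mem_affineSpan_pair_iff_exists_lineMap_eq.1 ha₃
  obtain ⟨β₁, rfl⟩ := mem_affineSpan_pair_iff_exists_lineMap_eq.1 hb₁
  obtain ⟨β₃, rfl⟩ := mem_affineSpan_pair_iff_exists_lineMap_eq.1 hb₃
  have hα₂ : α₂ ≠ 0 := by rintro rfl; exact ha₂o (AffineMap.lineMap_apply_zero _ _)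
  have hα₃ : α₃ ≠ 0 := by rintro rfl; exact ha₃o (AffineMap.lineMap_apply_zero _ _)
  have hβ₁₃ : β₁ ≠ β₃ := by rintro rfl; exact hb₁₃ rfl
  rw [← AffineMap.lineMap_apply_one (k := K) o a₁] at hp₁₂ hq₁₃
  rw [← AffineMap.lineMap_apply_one (k := K) o b₂] at hp₁₂ hr₃₂
  have hp := smul_vsub_eq_of_mem_line_of_mem_line hab hp₁₂ hp₂₁
  have hq := smul_vsub_eq_of_mem_line_of_mem_line hab hq₁₃ hq₃₁
  have hr := smul_vsub_eq_of_mem_line_of_mem_line hab hr₂₃ hr₃₂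
  have hc : α₃ * β₃ - 1 * β₁ ≠ 0 := fun hc => by
    rw [hc, zero_smul] at hq
    have := (LinearIndependent.pair_iff.1 hab _ _ hq.symm).1
    simp [hα₃, sub_eq_zero, hβ₁₃.symm] at this
  refine mem_line_of_smul_vsub_eq (o := o) (c := α₂ * (α₃ * β₃ - 1 * β₁))
    (s := α₃ * β₃ * (α₂ * 1 - 1 * β₁)) (t := β₁ * (α₃ * β₃ - α₂ * 1)) (mul_ne_zero hα₂ hc)
    (by ring) ?_
  linear_combination (norm := module) α₂ • hq - (α₃ * β₃) • hp - β₁ • hr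

end AffineGeometry

section SidePreservation

theorem zero_mem_uIcc_iff_mul_nonpos {R : Type*} [Ring R] [LinearOrder R] [IsStrictOrderedRing R]
    {a b : R} : 0 ∈ uIcc a b ↔ a * b ≤ 0 := by
  rw [mem_uIcc, mul_nonpos_iff]
  tauto

variable {E F : Type*} [AddCommGroup E] [Module ℝ E] [TopologicalSpace E] [ContinuousAdd E]
  [ContinuousSMul ℝ E] [AddCommGroup F] [Module ℝ F] [TopologicalSpace F]

theorem mul_apply_nonpos_of_mul_apply_comp_nonpos {f : E →ᵃ[ℝ] ℝ} {g : F →ᵃ[ℝ] ℝ}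
    (hg : Continuous g) {h : E → F} (hh : Continuous h) (hfg : ∀ x, g (h x) = 0 → f x = 0)
    {x y : E} (hxy : g (h x) * g (h y) ≤ 0) : f x * f y ≤ 0 := by
  have hconn : IsPreconnected ((g ∘ h) '' segment ℝ x y) :=
    (convex_segment x y).isPreconnected.image _ (hg.comp hh).continuousOn
  obtain ⟨z, hz, hgz⟩ := hconn.ordConnected.uIcc_subset
    (mem_image_of_mem _ (left_mem_segment ℝ x y)) (mem_image_of_mem _ (right_mem_segment ℝ x y))
    (zero_mem_uIcc_iff_mul_nonpos.2 hxy)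
  rw [← zero_mem_uIcc_iff_mul_nonpos, ← segment_eq_uIcc, ← image_segment, ← hfg z hgz]
  exact mem_image_of_mem f hz

variable [ContinuousAdd F] [ContinuousSMul ℝ F]

theorem exists_sign_comp_eq {f : E →ᵃ[ℝ] ℝ} {g : F →ᵃ[ℝ] ℝ} (hf : Continuous f)
    (hg : Continuous g) (h : E ≃ₜ F) (hfg : ∀ x, f x = 0 ↔ g (h x) = 0) {x₀ : E}
    (hx₀ : 0 < f x₀) :
    ∃ g' : F →ᵃ[ℝ] ℝ, ∀ x, SignType.sign (g' (h x)) = SignType.sign (f x) := by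
  refine ⟨g (h x₀) • g, fun x => ?_⟩
  have hiff : g (h x₀) * g (h x) ≤ 0 ↔ f x₀ * f x ≤ 0 :=
    ⟨mul_apply_nonpos_of_mul_apply_comp_nonpos hg h.continuous fun x => (hfg x).2, fun hx =>
      mul_apply_nonpos_of_mul_apply_comp_nonpos hf h.symm.continuous
        (fun y hy => by simpa using (hfg _).1 hy) (by simpa using hx)⟩
  have hgx₀ : g (h x₀) ≠ 0 := fun h0 => hx₀.ne' ((hfg x₀).2 h0)
  rw [AffineMap.coe_smul, Pi.smul_apply, smul_eq_mul]
  rcases lt_trichotomy (f x) 0 with hx | hx | hx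
  · rw [sign_neg hx, sign_neg]
    exact (hiff.2 (mul_nonpos_of_nonneg_of_nonpos hx₀.le hx.le)).lt_of_ne
      (mul_ne_zero hgx₀ fun h0 => hx.ne ((hfg x).2 h0))
  · rw [hx, (hfg x).1 hx, mul_zero]
  · rw [sign_pos hx, sign_pos (not_le.1 (hiff.not.2 (mul_pos hx₀ hx).not_ge))]

end SidePreservation

section Wedge

variable {K V P : Type*} [Field K] [LinearOrder K] [IsStrictOrderedRing K]
  [AddCommGroup V] [Module K V] [AddTorsor V P]

theorem apply_nonneg_of_mem_wedge (hV : Module.finrank K V = 2) {f φ ψ : P →ᵃ[K] K} {o a b : P}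
    (hfo : f o = 0) (hφo : φ o = 0) (hψo : ψ o = 0) (hφa : φ a = 0) (hψb : ψ b = 0)
    (hφb : 0 < φ b) (hψa : ψ a < 0) (hfa : 0 ≤ f a) (hfb : 0 ≤ f b) {x : P} (hφx : 0 ≤ φ x)
    (hψx : ψ x ≤ 0) : 0 ≤ f x := by
  rw [apply_eq_div_mul_add_div_mul hV hfo hφo hψo hφa hψb hφb.ne' hψa.ne x]
  exact add_nonneg (mul_nonneg (div_nonneg_of_nonpos hψx hψa.le) hfa)
    (mul_nonneg (div_nonneg hφx hφb.le) hfb)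

theorem apply_neg_of_mem_opposite_wedge (hV : Module.finrank K V = 2) {f φ ψ : P →ᵃ[K] K}
    {o a b : P} (hfo : f o = 0) (hφo : φ o = 0) (hψo : ψ o = 0) (hφa : φ a = 0) (hψb : ψ b = 0)
    (hφb : 0 < φ b) (hψa : ψ a < 0) (hfa : 0 < f a) (hfb : 0 < f b) {x : P} (hφx : φ x < 0)
    (hψx : 0 < ψ x) : f x < 0 := by
  rw [apply_eq_div_mul_add_div_mul hV hfo hφo hψo hφa hψb hφb.ne' hψa.ne x]
  exact add_neg (mul_neg_of_neg_of_pos (div_neg_of_pos_of_neg hψx hψa) hfa)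
    (mul_neg_of_neg_of_pos (div_neg_of_neg_of_pos hφx hφb) hfb)

end Wedge

section Lines

/-- Twice the signed area of the triangle `p q x`, as an affine form in `x`: it vanishes on the
line through `p` and `q` and separates its two sides. -/
noncomputable def signedArea (p q : Pt) : Pt →ᵃ[ℝ] ℝ where
  toFun x := (q 0 - p 0) * (x 1 - p 1) - (q 1 - p 1) * (x 0 - p 0)
  linear := (q 0 - p 0) • EuclideanSpace.projₗ 1 - (q 1 - p 1) • EuclideanSpace.projₗ 0
  map_vadd' x v := by
    simp only [vadd_eq_add, PiLp.add_apply, LinearMap.sub_apply, LinearMap.smul_apply,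
      PiLp.projₗ_apply, smul_eq_mul]
    ring

theorem signedArea_apply (p q x : Pt) :
    signedArea p q x = (q 0 - p 0) * (x 1 - p 1) - (q 1 - p 1) * (x 0 - p 0) := rfl

theorem signedArea_left (p q : Pt) : signedArea p q p = 0 := by
  simp [signedArea_apply]

theorem signedArea_right (p q : Pt) : signedArea p q q = 0 := by
  rw [signedArea_apply]
  ring

theorem exists_signedArea_pos {p q : Pt} (hpq : p ≠ q) : ∃ x, 0 < signedArea p q x := by
  refine ⟨!₂[p 0 - (q 1 - p 1), p 1 + (q 0 - p 0)], ?_⟩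
  have hne : q 0 - p 0 ≠ 0 ∨ q 1 - p 1 ≠ 0 := by
    by_contra! h
    exact hpq (PiLp.ext (Fin.forall_fin_two.2 ⟨by linarith, by linarith⟩))
  have : 0 < (q 0 - p 0) ^ 2 + (q 1 - p 1) ^ 2 := by
    rcases hne with h | h <;> positivity
  simp only [signedArea_apply, Matrix.cons_val_zero, Matrix.cons_val_one, Matrix.cons_val_fin_one]
  linarith

theorem range_lineMap_eq {p q : Pt} (hpq : p ≠ q) :
    range (lineMap p q : ℝ → Pt) = {x | signedArea p q x = 0} := by
  obtain ⟨w, hw⟩ := exists_signedArea_pos hpq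
  have hcol := collinear_setOf_eq_zero (by simp) hw.ne'
  ext x
  rw [mem_range, ← mem_affineSpan_pair_iff_exists_lineMap_eq]
  exact ⟨eq_zero_of_mem_line (signedArea_left p q) (signedArea_right p q), fun hx =>
    hcol.mem_affineSpan_of_mem_of_ne (signedArea_left p q) (signedArea_right p q) hx hpq⟩

theorem isLine_iff_exists_range_lineMap {l : Set Pt} :
    IsLine l ↔ ∃ p q : Pt, p ≠ q ∧ l = range (lineMap p q : ℝ → Pt) := by
  constructor
  · rintro ⟨p, d, hd, rfl⟩
    refine ⟨p, p + d, by simpa using hd, ?_⟩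
    ext x
    simp [AffineMap.lineMap_apply, add_comm, eq_comm]
  · rintro ⟨p, q, hpq, rfl⟩
    refine ⟨p, q - p, sub_ne_zero.2 hpq.symm, ?_⟩
    ext x
    simp [AffineMap.lineMap_apply, add_comm, eq_comm]

theorem isClosedEmbedding_lineMap {𝕜 E : Type*} [NontriviallyNormedField 𝕜] [CompleteSpace 𝕜]
    [AddCommGroup E] [TopologicalSpace E] [IsTopologicalAddGroup E] [T2Space E] [Module 𝕜 E]
    [ContinuousSMul 𝕜 E] {p q : E} (hpq : p ≠ q) :
    Topology.IsClosedEmbedding (lineMap p q : 𝕜 → E) := by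
  have heq : ⇑(lineMap p q : 𝕜 →ᵃ[𝕜] E) = Homeomorph.addRight p ∘ fun t : 𝕜 => t • (q - p) :=
    funext (AffineMap.lineMap_apply_module' p q)
  rw [heq]
  exact (Homeomorph.addRight p).isClosedEmbedding.comp
    (isClosedEmbedding_smul_left (sub_ne_zero.2 hpq.symm))

theorem existsUnique_apply_lineMap_eq_zero {K V P : Type*} [Field K] [AddCommGroup V] [Module K V]
    [AddTorsor V P] {f : P →ᵃ[K] K} {p q : P} (h : f p ≠ f q) :
    ∃! t : K, f (lineMap p q t) = 0 := by
  have hpq : f q - f p ≠ 0 := sub_ne_zero.2 h.symm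
  refine ⟨-f p / (f q - f p), ?_, fun t ht => ?_⟩
  · simp only [AffineMap.apply_lineMap, AffineMap.lineMap_apply_ring']
    field_simp
    ring
  · simp only [AffineMap.apply_lineMap, AffineMap.lineMap_apply_ring'] at ht
    rw [eq_div_iff hpq]
    linear_combination ht

theorem exists_range_lineMap_inter_eq_singleton {p q p' q' : Pt} (hpq : p ≠ q)
    (h : signedArea p q p' ≠ signedArea p q q') :
    ∃ x, range (lineMap p q : ℝ → Pt) ∩ range (lineMap p' q' : ℝ → Pt) = {x} := by
  obtain ⟨t, ht, huniq⟩ := existsUnique_apply_lineMap_eq_zero h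
  refine ⟨lineMap p' q' t, ?_⟩
  rw [range_lineMap_eq hpq]
  refine Subset.antisymm ?_ (singleton_subset_iff.2 ⟨ht, mem_range_self t⟩)
  rintro _ ⟨hs, s, rfl⟩
  rw [huniq s hs, mem_singleton_iff]

end Lines

namespace EmbeddedGraph

/-- The graph with two vertices, at `γ 0` and `γ 1`, and the simple arc `γ` as its only edge. -/
noncomputable def singleEdge (γ : ℝ → Pt) (hcont : ContinuousOn γ (Icc 0 1))
    (hinj : InjOn γ (Icc 0 1)) : EmbeddedGraph (Fin 2) where
  pos := ![γ 0, γ 1]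
  posInj := by
    have hne : γ 0 ≠ γ 1 := hinj.ne (by simp) (by simp) zero_ne_one
    simp [Function.Injective, Fin.forall_fin_two, hne, hne.symm]
  G := ⊤
  arc _ _ _ := γ '' Icc 0 1
  arc_symm _ := rfl
  arc_curve {u v} h := by
    obtain ⟨rfl, rfl⟩ | ⟨rfl, rfl⟩ : u = 0 ∧ v = 1 ∨ u = 1 ∧ v = 0 := by
      have := h.ne
      lia
    · exact ⟨γ, hcont, hinj, rfl, rfl, rfl⟩
    · have hflip : (fun t : ℝ => 1 - t) '' Icc 0 1 = Icc 0 1 := by simp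
      have hmaps := mapsTo_iff_image_subset.2 hflip.subset
      exact ⟨γ ∘ fun t => 1 - t, hcont.comp (by fun_prop) hmaps,
        hinj.comp sub_right_injective.injOn hmaps, by simp, by simp, by rw [image_comp, hflip]⟩
  arc_inter h h' hne := by
    have hedge : ∀ u v : Fin 2, u ≠ v → s(u, v) = s(0, 1) := by decide
    exact absurd ((hedge _ _ h.ne).trans (hedge _ _ h'.ne).symm) hne
  arc_vertex {u v} h w _ := by
    have := h.ne
    lia

section SingleEdge

variable {γ : ℝ → Pt} {hcont : ContinuousOn γ (Icc 0 1)} {hinj : InjOn γ (Icc 0 1)}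

theorem singleEdge_adj : (singleEdge γ hcont hinj).G.Adj 0 1 :=
  (SimpleGraph.top_adj _ _).2 zero_ne_one

theorem singleEdge_arc_inter_subsingleton {c : ℝ → Pt} {φ : Pt → ℝ}
    (hφ : ∀ x, x ∈ range c ↔ φ x = 0) (hmono : StrictMonoOn (φ ∘ γ) (Icc 0 1)) {u v : Fin 2}
    (h : (singleEdge γ hcont hinj).G.Adj u v) :
    ((singleEdge γ hcont hinj).arc h ∩ range c).Subsingleton := by
  rintro _ ⟨⟨s, hs, rfl⟩, hs'⟩ _ ⟨⟨t, ht, rfl⟩, ht'⟩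
  rw [hmono.injOn hs ht (((hφ _).1 hs').trans ((hφ _).1 ht').symm)]

theorem not_singleEdge_arc_subset {c : ℝ → Pt} {φ : Pt → ℝ}
    (hφ : ∀ x, x ∈ range c ↔ φ x = 0) (hmono : StrictMonoOn (φ ∘ γ) (Icc 0 1)) {u v : Fin 2}
    (h : (singleEdge γ hcont hinj).G.Adj u v) :
    ¬ (singleEdge γ hcont hinj).arc h ⊆ range c := by
  intro hsub
  have hzero {t : ℝ} (ht : t ∈ Icc (0 : ℝ) 1) : φ (γ t) = 0 :=
    (hφ _).1 (hsub (mem_image_of_mem γ ht))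
  exact (hmono (by simp) (by simp) zero_lt_one).ne
    ((hzero (by simp)).trans (hzero (by simp)).symm)

variable {k : ℕ} {A : Fin k → ℝ → Pt}

theorem mem_crossedSet_singleEdge_iff {i : Fin k} {φ : Pt → ℝ}
    (hφ : ∀ x, x ∈ range (A i) ↔ φ x = 0) (hφc : Continuous φ)
    (hmono : StrictMonoOn (φ ∘ γ) (Icc 0 1)) :
    i ∈ (singleEdge γ hcont hinj).crossedSet A singleEdge_adj ↔
      φ (γ 0) < 0 ∧ 0 < φ (γ 1) := by
  constructor
  · rintro ⟨⟨_, ⟨⟨t, ht, rfl⟩, hends⟩, hline⟩, -⟩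
    have hzero : (φ ∘ γ) t = 0 := (hφ _).1 hline
    have ht0 : 0 < t := ht.1.lt_of_ne' fun h => hends (.inl (congrArg γ h))
    have ht1 : t < 1 := ht.2.lt_of_ne fun h => hends (.inr (congrArg γ h))
    exact ⟨(hmono (by simp) ht ht0).trans_eq hzero, hzero.symm.trans_lt (hmono ht (by simp) ht1)⟩
  · rintro ⟨h0, h1⟩
    obtain ⟨t, ht, hzero⟩ := intermediate_value_Icc zero_le_one (hφc.comp_continuousOn hcont)
      ⟨h0.le, h1.le⟩
    refine ⟨⟨γ t, ⟨mem_image_of_mem γ ht, ?_⟩, (hφ _).2 hzero⟩,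
      not_singleEdge_arc_subset hφ hmono singleEdge_adj⟩
    rintro (h | h)
    · exact h0.ne ((congrArg φ h).symm.trans hzero)
    · exact h1.ne' ((congrArg φ (mem_singleton_iff.1 h)).symm.trans hzero)

theorem anchorNum_singleEdge {φ : Fin k → Pt → ℝ} (hφ : ∀ i x, x ∈ range (A i) ↔ φ i x = 0)
    (hmono : ∀ i, StrictMonoOn (φ i ∘ γ) (Icc 0 1)) :
    (singleEdge γ hcont hinj).anchorNum A singleEdge_adj =
      if ∃ i j, i ≠ j ∧ φ i (γ 0) = 0 ∧ φ j (γ 1) = 0 then 2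
      else if (∃ i, φ i (γ 0) = 0) ∨ ∃ i, φ i (γ 1) = 0 then 1 else 0 := by
  have hpos0 : (singleEdge γ hcont hinj).pos 0 = γ 0 := rfl
  have hpos1 : (singleEdge γ hcont hinj).pos 1 = γ 1 := rfl
  simp only [anchorNum, hpos0, hpos1, hφ, not_singleEdge_arc_subset (hφ _) (hmono _),
    not_false_eq_true, and_true]

end SingleEdge

end EmbeddedGraph

namespace PappusConfiguration

/-- The three collinear points of the first row of the Pappus configuration. The coordinates are
chosen to be integral and to make the horizontal axis the Pappus line. -/
noncomputable def rowA : Fin 3 → Pt := ![!₂[-5, 5], !₂[1, 8], !₂[15, 15]]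

/-- The three collinear points of the second row of the Pappus configuration. -/
noncomputable def rowB : Fin 3 → Pt := ![!₂[-6, -6], !₂[-1, -5], !₂[4, -4]]

/-- The upper of the two points spanning each of the eight straight lines: lines `0` and `1` carry
the two rows, lines `2, 3`, lines `4, 5` and lines `6, 7` meet in the three points which the Pappus
theorem asserts to be collinear. -/
noncomputable def upper : Fin 8 → Pt :=
  ![rowA 1, rowB 1, rowA 0, rowA 1, rowA 0, rowA 2, rowA 1, rowA 2]

/-- The lower of the two points spanning each of the eight straight lines. -/
noncomputable def lower : Fin 8 → Pt :=
  ![rowA 0, rowB 0, rowB 1, rowB 0, rowB 2, rowB 0, rowB 2, rowB 1]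

/-- The affine form cutting out the `i`-th line, positive to its right. -/
noncomputable def form (i : Fin 8) : Pt →ᵃ[ℝ] ℝ := signedArea (upper i) (lower i)

theorem form_apply (i : Fin 8) (x : Pt) : form i x =
    ![3 * (x 0 - 2 * x 1 + 15), x 0 - 5 * x 1 - 24, 2 * (5 * x 0 + 2 * x 1 + 15),
      7 * (2 * x 0 - x 1 + 6), 9 * (x 0 + x 1), 21 * (x 0 - x 1), 3 * (4 * x 0 + x 1 - 12),
      4 * (5 * x 0 - 4 * x 1 - 15)] i := by
  fin_cases i <;> simp [form, signedArea_apply, upper, lower, rowA, rowB] <;> ring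

/-- The horizontal displacements from `upper i` to `lower i`. -/
def run : Fin 8 → ℤ := ![-6, -5, 4, -7, 9, -21, 3, -16]

/-- The vertical displacements from `lower i` to `upper i`. -/
def drop : Fin 8 → ℤ := ![3, 1, 10, 14, 9, 21, 12, 20]

theorem lower_sub_upper (i : Fin 8) : lower i 0 - upper i 0 = run i := by
  fin_cases i <;> simp [upper, lower, rowA, rowB, run] <;> norm_num

theorem upper_sub_lower (i : Fin 8) : upper i 1 - lower i 1 = drop i := by
  fin_cases i <;> simp [upper, lower, rowA, rowB, drop] <;> norm_num

-- The slope of `dippedArc a b` is at most `3 / 20` in absolute value for `a, b ∈ [0, 1 / 10]`.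
theorem three_mul_abs_lower_sub_upper_lt (i : Fin 8) :
    3 * |lower i 0 - upper i 0| < 20 * (upper i 1 - lower i 1) := by
  have hdir : ∀ i, 3 * |run i| < 20 * drop i := by decide
  have hcast : (3 : ℝ) * |(run i : ℝ)| < 20 * drop i := mod_cast hdir i
  rwa [lower_sub_upper, upper_sub_lower]

theorem upper_ne_lower (i : Fin 8) : upper i ≠ lower i := fun h => by
  have := three_mul_abs_lower_sub_upper_lt i
  simp [h] at this

theorem form_upper_ne_form_lower {i j : Fin 8} (hij : i ≠ j) :
    form i (upper j) ≠ form i (lower j) := by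
  have hcross : form i (upper j) - form i (lower j) = run i * drop j - run j * drop i := by
    simp only [form, signedArea_apply, ← lower_sub_upper, ← upper_sub_lower]
    ring
  have hdir : ∀ i j, i ≠ j → run i * drop j ≠ run j * drop i := by decide
  rw [← sub_ne_zero, hcross, sub_ne_zero]
  exact_mod_cast hdir i j hij

/-- The eight lines, parametrized as curves. -/
noncomputable def curve (i : Fin 8) (t : ℝ) : Pt := lineMap (upper i) (lower i) t

theorem mem_range_curve_iff (i : Fin 8) (x : Pt) : x ∈ range (curve i) ↔ form i x = 0 :=
  Set.ext_iff.1 (range_lineMap_eq (upper_ne_lower i)) x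

theorem stretchable_curve : Stretchable curve :=
  ⟨fun i => range (curve i), Homeomorph.refl Pt, fun i =>
    isLine_iff_exists_range_lineMap.2 ⟨_, _, upper_ne_lower i, rfl⟩, fun _ => image_id _⟩

/-- The arc from `(-3, a)` to `(3, b)` with second coordinate a parabola, which for small
`a, b ≥ 0` passes below the origin. -/
noncomputable def dippedArc (a b t : ℝ) : Pt :=
  !₂[6 * t - 3, a * (1 - t) + b * t - 4 / 5 * (t * (1 - t))]

theorem continuous_dippedArc (a b : ℝ) : Continuous (dippedArc a b) := by
  unfold dippedArc
  fun_prop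

theorem injective_dippedArc (a b : ℝ) : Function.Injective (dippedArc a b) := fun s t hst => by
  have : 6 * s - 3 = 6 * t - 3 := congrArg (· 0) hst
  linarith

theorem strictMonoOn_signedArea_dippedArc {a b : ℝ} {p q : Pt} (hab : |b - a| ≤ 1 / 10)
    (hpq : 3 * |q 0 - p 0| < 20 * (p 1 - q 1)) :
    StrictMonoOn (signedArea p q ∘ dippedArc a b) (Icc 0 1) := by
  intro s hs t ht hst
  have hslope : |b - a - 4 / 5 * (1 - s - t)| ≤ 9 / 10 := by
    rw [abs_le] at hab ⊢
    constructor <;> linarith [hs.1, hs.2, ht.1, ht.2]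
  have hrise : |(q 0 - p 0) * (b - a - 4 / 5 * (1 - s - t))| < 6 * (p 1 - q 1) := by
    rw [abs_mul]
    linarith [mul_le_mul_of_nonneg_left hslope (abs_nonneg (q 0 - p 0))]
  have hdiff : signedArea p q (dippedArc a b t) - signedArea p q (dippedArc a b s) =
      (t - s) * ((q 0 - p 0) * (b - a - 4 / 5 * (1 - s - t)) + 6 * (p 1 - q 1)) := by
    simp only [signedArea_apply, dippedArc, Matrix.cons_val_zero, Matrix.cons_val_one,
      Matrix.cons_val_fin_one]
    ring
  refine sub_pos.1 (hdiff ▸ mul_pos (sub_pos.2 hst) ?_)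
  linarith [neg_lt_of_abs_lt hrise]

theorem form_dippedArc_zero (a b : ℝ) (i : Fin 8) : form i (dippedArc a b 0) =
    ![3 * (12 - 2 * a), -27 - 5 * a, 4 * a, -7 * a, 9 * (a - 3),
      -21 * (a + 3), 3 * (a - 24), -8 * (2 * a + 15)] i := by
  fin_cases i <;> norm_num [form_apply, dippedArc] <;> ring

theorem form_dippedArc_one (a b : ℝ) (i : Fin 8) : form i (dippedArc a b 1) =
    ![3 * (18 - 2 * b), -21 - 5 * b, 4 * (b + 15), 7 * (12 - b),
      9 * (b + 3), 21 * (3 - b), 3 * b, -16 * b] i := by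
  fin_cases i <;> norm_num [form_apply, dippedArc] <;> ring

variable {a b : ℝ}

/-- The graph whose only edge is drawn as `dippedArc a b`. -/
noncomputable abbrev edge (a b : ℝ) : EmbeddedGraph (Fin 2) :=
  .singleEdge (dippedArc a b) (continuous_dippedArc a b).continuousOn
    (injective_dippedArc a b).injOn

theorem strictMonoOn_form_dippedArc (ha : a ∈ Icc 0 (1 / 10)) (hb : b ∈ Icc 0 (1 / 10))
    (i : Fin 8) : StrictMonoOn (form i ∘ dippedArc a b) (Icc 0 1) :=
  strictMonoOn_signedArea_dippedArc
    (abs_sub_le_iff.2 ⟨by linarith [ha.1, hb.2], by linarith [ha.2, hb.1]⟩)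
    (three_mul_abs_lower_sub_upper_lt i)

theorem isArrangement_curve (ha : a ∈ Icc 0 (1 / 10)) (hb : b ∈ Icc 0 (1 / 10)) :
    (edge a b).IsArrangement curve := by
  refine ⟨fun i => ?_, fun i j hij =>
    exists_range_lineMap_inter_eq_singleton (upper_ne_lower i) (form_upper_ne_form_lower hij)⟩
  have hemb : Topology.IsClosedEmbedding (curve i) := isClosedEmbedding_lineMap (upper_ne_lower i)
  exact ⟨hemb.continuous, hemb.injective, hemb.tendsto_cocompact, fun h =>
    .inr (EmbeddedGraph.singleEdge_arc_inter_subsingleton (mem_range_curve_iff i)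
      (strictMonoOn_form_dippedArc ha hb i) h)⟩

theorem form_dippedArc_zero_eq_zero_iff (ha : a ∈ Icc 0 (1 / 10)) (i : Fin 8) :
    form i (dippedArc a b 0) = 0 ↔ a = 0 ∧ (i = 2 ∨ i = 3) := by
  rw [form_dippedArc_zero]
  obtain ⟨h0, h1⟩ := ha
  fin_cases i <;> simp <;> linarith

theorem form_dippedArc_one_eq_zero_iff (hb : b ∈ Icc 0 (1 / 10)) (i : Fin 8) :
    form i (dippedArc a b 1) = 0 ↔ b = 0 ∧ (i = 6 ∨ i = 7) := by
  rw [form_dippedArc_one]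
  obtain ⟨h0, h1⟩ := hb
  fin_cases i <;> simp <;> linarith

theorem anchorNum_edge (ha : a ∈ Icc 0 (1 / 10)) (hb : b ∈ Icc 0 (1 / 10)) :
    (edge a b).anchorNum curve EmbeddedGraph.singleEdge_adj =
      (if a = 0 then 1 else 0) + if b = 0 then 1 else 0 := by
  rw [EmbeddedGraph.anchorNum_singleEdge mem_range_curve_iff (strictMonoOn_form_dippedArc ha hb)]
  simp only [form_dippedArc_zero_eq_zero_iff ha, form_dippedArc_one_eq_zero_iff hb]
  have hends : ∃ i j : Fin 8, i ≠ j ∧ (i = 2 ∨ i = 3) ∧ (j = 6 ∨ j = 7) := ⟨2, 6, by decide⟩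
  by_cases ha0 : a = 0 <;> by_cases hb0 : b = 0 <;> simp [ha0, hb0, hends]

theorem crossedSet_edge (ha : a ∈ Icc 0 (1 / 10)) (hb : b ∈ Icc 0 (1 / 10)) :
    (edge a b).crossedSet curve EmbeddedGraph.singleEdge_adj =
      {4, 5} ∪ (if a = 0 then ∅ else {3}) ∪ if b = 0 then ∅ else {6} := by
  ext i
  rw [EmbeddedGraph.mem_crossedSet_singleEdge_iff (mem_range_curve_iff i)
    (form i).continuous_of_finiteDimensional (strictMonoOn_form_dippedArc ha hb i),
    form_dippedArc_zero, form_dippedArc_one]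
  obtain ⟨ha0, ha1⟩ := ha
  obtain ⟨hb0, hb1⟩ := hb
  fin_cases i <;> split_ifs <;> simp <;> grind

theorem ncard_crossedSet_edge (ha : a ∈ Icc 0 (1 / 10)) (hb : b ∈ Icc 0 (1 / 10)) :
    ((edge a b).crossedSet curve EmbeddedGraph.singleEdge_adj).ncard =
      2 + (if a = 0 then 0 else 1) + if b = 0 then 0 else 1 := by
  rw [crossedSet_edge ha hb]
  split_ifs <;> simp [Set.ncard_eq_toFinset_card']

/-- The common point of the two rows. -/
noncomputable def rowsInter : Pt := !₂[-41, -13]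

/-- The three intersection points on the Pappus line, which is the horizontal axis. -/
noncomputable def cross : Fin 3 → Pt := ![!₂[-3, 0], !₂[0, 0], !₂[3, 0]]

theorem form_rowA (i : Fin 8) (k : Fin 3) : form i (rowA k) =
    !![0, -54, 0, -63, 0, -210, -81, -240;
      0, -63, 72, 0, 81, -147, 0, -168;
      0, -84, 240, 147, 270, 0, 189, 0] k i := by
  fin_cases k <;> fin_cases i <;> simp [form_apply, rowA] <;> norm_num

theorem form_cross (i : Fin 8) (k : Fin 3) : form i (cross k) =
    !![36, -27, 0, 0, -27, -63, -72, -120;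
      45, -24, 30, 42, 0, 0, -36, -60;
      54, -21, 60, 84, 27, 63, 0, 0] k i := by
  fin_cases k <;> fin_cases i <;> simp [form_apply, cross] <;> norm_num

/-- `h` maps the two sides of the `i`-th line of the configuration to the two sides of the zero set
of `g i`, and the line itself into that zero set. -/
def PreservesSides (h : Pt → Pt) (g : Fin 8 → Pt →ᵃ[ℝ] ℝ) : Prop :=
  ∀ i x, SignType.sign (g i (h x)) = SignType.sign (form i x)

namespace PreservesSides

variable {h : Pt → Pt} {g : Fin 8 → Pt →ᵃ[ℝ] ℝ}

theorem apply_eq_zero_iff (hg : PreservesSides h g) {i : Fin 8} {x : Pt} :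
    g i (h x) = 0 ↔ form i x = 0 := by
  rw [← sign_eq_zero_iff, hg, sign_eq_zero_iff]

theorem apply_pos_iff (hg : PreservesSides h g) {i : Fin 8} {x : Pt} :
    0 < g i (h x) ↔ 0 < form i x := by
  rw [← sign_eq_one_iff, hg, sign_eq_one_iff]

theorem apply_neg_iff (hg : PreservesSides h g) {i : Fin 8} {x : Pt} :
    g i (h x) < 0 ↔ form i x < 0 := by
  rw [← sign_eq_neg_one_iff, hg, sign_eq_neg_one_iff]

theorem apply_nonneg_iff (hg : PreservesSides h g) {i : Fin 8} {x : Pt} :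
    0 ≤ g i (h x) ↔ 0 ≤ form i x := by
  rw [← sign_nonneg_iff, hg, sign_nonneg_iff]

theorem apply_nonpos_iff (hg : PreservesSides h g) {i : Fin 8} {x : Pt} :
    g i (h x) ≤ 0 ↔ form i x ≤ 0 := by
  rw [← sign_nonpos_iff, hg, sign_nonpos_iff]

theorem mem_line_of_form_eq_zero (hg : PreservesSides h g) (hinj : Function.Injective h) (i : Fin 8)
    {x y z : Pt} (hxy : x ≠ y) (hx : form i x = 0) (hy : form i y = 0) (hz : form i z = 0) :
    h z ∈ line[ℝ, h x, h y] := by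
  obtain ⟨w, hw⟩ := exists_signedArea_pos (upper_ne_lower i)
  have hcol := collinear_setOf_eq_zero finrank_euclideanSpace_fin (hg.apply_pos_iff.2 hw).ne'
  exact hcol.mem_affineSpan_of_mem_of_ne (hg.apply_eq_zero_iff.2 hx) (hg.apply_eq_zero_iff.2 hy)
    (hg.apply_eq_zero_iff.2 hz) (hinj.ne hxy)

theorem apply_cross_mem_line (hg : PreservesSides h g) (hinj : Function.Injective h) :
    h (cross 1) ∈ line[ℝ, h (cross 0), h (cross 2)] := by
  have hA (k : Fin 3) : form 0 (rowA k) = 0 := by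
    fin_cases k <;> simp [form_rowA]
  have hB (k : Fin 3) : form 1 (rowB k) = 0 := by
    fin_cases k <;> simp [form_apply, rowB] <;> norm_num
  have hO₀ : form 0 rowsInter = 0 := by norm_num [form_apply, rowsInter]
  have hO₁ : form 1 rowsInter = 0 := by norm_num [form_apply, rowsInter]
  have hOA (k : Fin 3) : rowA k ≠ rowsInter := ne_of_apply_ne (· 0) <| by
    fin_cases k <;> norm_num [rowA, rowsInter, Matrix.cons_val]
  have hOB : rowB 1 ≠ rowsInter := ne_of_apply_ne (· 0) <| by norm_num [rowB, rowsInter]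
  have hB₀₂ : rowB 0 ≠ rowB 2 := ne_of_apply_ne (· 0) <| by
    simp [rowB]
    norm_num
  have hBA : h (rowB 1) ∉ line[ℝ, h rowsInter, h (rowA 0)] := fun hmem => by
    have hB₁ := hg.apply_eq_zero_iff.1 (eq_zero_of_mem_line (hg.apply_eq_zero_iff.2 hO₀)
      (hg.apply_eq_zero_iff.2 (hA 0)) hmem)
    norm_num [form_apply, rowB] at hB₁
  have hspan (i : Fin 8) {z : Pt} (hz : form i z = 0) : h z ∈ line[ℝ, h (upper i), h (lower i)] :=
    hg.mem_line_of_form_eq_zero hinj i (upper_ne_lower i) (signedArea_left _ _)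
      (signedArea_right _ _) hz
  have hrowA (k : Fin 3) := hg.mem_line_of_form_eq_zero hinj 0 (hOA 0).symm hO₀ (hA 0) (hA k)
  have hrowB (k : Fin 3) := hg.mem_line_of_form_eq_zero hinj 1 hOB.symm hO₁ (hB 1) (hB k)
  exact pappus (hinj.ne (hOA 0)) hBA (hrowA 1) (hrowA 2) (hrowB 0) (hrowB 2) (hinj.ne (hOA 1))
    (hinj.ne (hOA 2)) (hinj.ne hB₀₂) (hspan 2 (form_cross 2 0)) (hspan 3 (form_cross 3 0))
    (hspan 4 (form_cross 4 1)) (hspan 5 (form_cross 5 1)) (hspan 6 (form_cross 6 2))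
    (hspan 7 (form_cross 7 2))

theorem exists_pappus_form (hg : PreservesSides h g) (hinj : Function.Injective h) :
    ∃ f : Pt →ᵃ[ℝ] ℝ, (∀ k, f (h (cross k)) = 0) ∧ ∀ k, 0 < f (h (rowA k)) := by
  have hpos {i : Fin 8} {x : Pt} (hx : 0 < form i x) : 0 < g i (h x) := hg.apply_pos_iff.2 hx
  have hneg {i : Fin 8} {x : Pt} (hx : form i x < 0) : g i (h x) < 0 := hg.apply_neg_iff.2 hx
  have hzero {i : Fin 8} {x : Pt} (hx : form i x = 0) : g i (h x) = 0 := hg.apply_eq_zero_iff.2 hx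
  let f := g 3 (h (cross 2)) • g 2 - g 2 (h (cross 2)) • g 3
  have hf (x : Pt) : f x = g 3 (h (cross 2)) * g 2 x - g 2 (h (cross 2)) * g 3 x := rfl
  have hf₀ : f (h (cross 0)) = 0 := by
    rw [hf, hzero (form_cross 2 0), hzero (form_cross 3 0), mul_zero, mul_zero, sub_zero]
  have hf₂ : f (h (cross 2)) = 0 := by
    rw [hf, mul_comm, sub_self]
  have hf₁ : f (h (cross 1)) = 0 := eq_zero_of_mem_line hf₀ hf₂ (hg.apply_cross_mem_line hinj)
  have h₂ : 0 < g 2 (h (cross 2)) := hpos (by simp [form_cross])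
  have h₃ : 0 < g 3 (h (cross 2)) := hpos (by simp [form_cross])
  have hA₀ : 0 < f (h (rowA 0)) := by
    rw [hf, hzero (form_rowA 2 0), mul_zero, zero_sub, neg_pos]
    exact mul_neg_of_pos_of_neg h₂ (hneg (by simp [form_rowA]))
  have hA₁ : 0 < f (h (rowA 1)) := by
    rw [hf, hzero (form_rowA 3 1), mul_zero, sub_zero]
    exact mul_pos h₃ (hpos (by simp [form_rowA]))
  have hA₂ : 0 < f (h (rowA 2)) := by
    have h₆A : 0 < g 6 (h (rowA 2)) := hpos (by simp [form_rowA])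
    have h₇A : g 7 (h (rowA 1)) < 0 := hneg (by simp [form_rowA])
    have h₆ : g 6 (h (cross 0)) < 0 := hneg (by simp [form_cross])
    have h₇ : g 7 (h (cross 0)) < 0 := hneg (by simp [form_cross])
    have hsum := apply_eq_div_mul_add_div_mul finrank_euclideanSpace_fin hf₂
      (hzero (form_cross 6 2)) (hzero (form_cross 7 2)) (hzero (form_rowA 6 1))
      (hzero (form_rowA 7 2)) h₆A.ne' h₇A.ne (h (cross 0))
    refine pos_of_mul_neg_right ?_ (div_neg_of_neg_of_pos h₆ h₆A).le
    linarith [mul_pos (div_pos_of_neg_of_neg h₇ h₇A) hA₁]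
  exact ⟨f, fun k => by fin_cases k <;> assumption, fun k => by fin_cases k <;> assumption⟩

theorem notMem_segment (hg : PreservesSides h g) (hinj : Function.Injective h) {u v y : Pt}
    (hu₂ : 0 ≤ form 2 u) (hu₃ : form 3 u ≤ 0) (hv₆ : 0 ≤ form 6 v) (hv₇ : form 7 v ≤ 0)
    (hy₄ : form 4 y < 0) (hy₅ : 0 < form 5 y) : h y ∉ segment ℝ (h u) (h v) := by
  obtain ⟨f, hf, hfA⟩ := hg.exists_pappus_form hinj
  have hV : Module.finrank ℝ Pt = 2 := finrank_euclideanSpace_fin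
  have hzero {i : Fin 8} {x : Pt} (hx : form i x = 0) : g i (h x) = 0 := hg.apply_eq_zero_iff.2 hx
  have hpos {i : Fin 8} {x : Pt} (hx : 0 < form i x) : 0 < g i (h x) := hg.apply_pos_iff.2 hx
  have hneg {i : Fin 8} {x : Pt} (hx : form i x < 0) : g i (h x) < 0 := hg.apply_neg_iff.2 hx
  have hfu : 0 ≤ f (h u) :=
    apply_nonneg_of_mem_wedge hV (hf 0) (hzero (form_cross 2 0)) (hzero (form_cross 3 0))
      (hzero (form_rowA 2 0)) (hzero (form_rowA 3 1)) (hpos (by simp [form_rowA]))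
      (hneg (by simp [form_rowA])) (hfA 0).le (hfA 1).le
      (hg.apply_nonneg_iff.2 hu₂) (hg.apply_nonpos_iff.2 hu₃)
  have hfv : 0 ≤ f (h v) :=
    apply_nonneg_of_mem_wedge hV (hf 2) (hzero (form_cross 6 2)) (hzero (form_cross 7 2))
      (hzero (form_rowA 6 1)) (hzero (form_rowA 7 2)) (hpos (by simp [form_rowA]))
      (hneg (by simp [form_rowA])) (hfA 1).le (hfA 2).le
      (hg.apply_nonneg_iff.2 hv₆) (hg.apply_nonpos_iff.2 hv₇)
  have hfy : f (h y) < 0 :=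
    apply_neg_of_mem_opposite_wedge hV (hf 1) (hzero (form_cross 4 1)) (hzero (form_cross 5 1))
      (hzero (form_rowA 4 0)) (hzero (form_rowA 5 2)) (hpos (by simp [form_rowA]))
      (hneg (by simp [form_rowA])) (hfA 0) (hfA 2) (hneg hy₄) (hpos hy₅)
  intro hseg
  have hnonneg : 0 ≤ f (h y) := ((convex_Ici 0).affine_preimage f).segment_subset hfu hfv hseg
  exact hfy.not_ge hnonneg

end PreservesSides

theorem exists_preservesSides {h : Pt ≃ₜ Pt} (hline : ∀ i, IsLine (h '' range (curve i))) :
    ∃ g, PreservesSides h g := by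
  choose p q hpq hL using fun i => isLine_iff_exists_range_lineMap.1 (hline i)
  have hzero (i : Fin 8) (x : Pt) : form i x = 0 ↔ signedArea (p i) (q i) (h x) = 0 := by
    rw [← mem_range_curve_iff, ← h.injective.mem_set_image, hL, range_lineMap_eq (hpq i)]
    rfl
  have hsign (i : Fin 8) : ∃ g : Pt →ᵃ[ℝ] ℝ,
      ∀ x, SignType.sign (g (h x)) = SignType.sign (form i x) :=
    have ⟨_, hx₀⟩ := exists_signedArea_pos (upper_ne_lower i)
    exists_sign_comp_eq (form i).continuous_of_finiteDimensional
      (AffineMap.continuous_of_finiteDimensional _) h (hzero i) hx₀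
  choose g hg using hsign
  exact ⟨g, hg⟩

theorem form_dippedArc_half (a b : ℝ) :
    form 4 (dippedArc a b (1 / 2)) = 9 * ((a + b) / 2 - 1 / 5) ∧
      form 5 (dippedArc a b (1 / 2)) = -21 * ((a + b) / 2 - 1 / 5) := by
  constructor <;> simp [form_apply, dippedArc] <;> ring

theorem not_isAlignedDrawing (ha : a ∈ Icc 0 (1 / 10)) (hb : b ∈ Icc 0 (1 / 10)) {Γ : Fin 2 → Pt}
    {L : Fin 8 → Set Pt} : ¬ (edge a b).IsAlignedDrawing curve Γ L := by
  rintro ⟨hL, h, hpos, harc, hcurve⟩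
  obtain ⟨g, hg⟩ := exists_preservesSides fun i => hcurve i ▸ hL i
  obtain ⟨ha0, ha1⟩ := ha
  obtain ⟨hb0, hb1⟩ := hb
  have hmid := form_dippedArc_half a b
  refine hg.notMem_segment h.injective (u := dippedArc a b 0) (v := dippedArc a b 1)
    (y := dippedArc a b (1 / 2)) ?_ ?_ ?_ ?_ ?_ ?_ ?_
  · simp [form_dippedArc_zero, ha0]
  · simp [form_dippedArc_zero, ha0]
  · simp [form_dippedArc_one, hb0]
  · simp [form_dippedArc_one, hb0]
  · linarith
  · linarith
  · have h0 : h (dippedArc a b 0) = Γ 0 := hpos 0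
    have h1 : h (dippedArc a b 1) = Γ 1 := hpos 1
    rw [h0, h1, ← harc EmbeddedGraph.singleEdge_adj]
    exact mem_image_of_mem h (mem_image_of_mem _ (by norm_num))

theorem existsBadSingleEdge (ha : a ∈ Icc 0 (1 / 10)) (hb : b ∈ Icc 0 (1 / 10)) :
    ExistsBadSingleEdge ((if a = 0 then 1 else 0) + if b = 0 then 1 else 0)
      (2 + (if a = 0 then 0 else 1) + if b = 0 then 0 else 1) :=
  ⟨edge a b, curve, EmbeddedGraph.singleEdge_adj, isArrangement_curve ha hb, stretchable_curve,
    anchorNum_edge ha hb, ncard_crossedSet_edge ha hb,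
    fun ⟨i, hi⟩ => EmbeddedGraph.not_singleEdge_arc_subset (mem_range_curve_iff i)
      (strictMonoOn_form_dippedArc ha hb i) EmbeddedGraph.singleEdge_adj hi,
    fun ⟨_, _, hdraw⟩ => not_isAlignedDrawing ha hb hdraw⟩

end PappusConfiguration

/-- There exist stretchable arrangements of 8 pseudolines with a
single edge — 0-anchored and 4-crossed, resp. 1-anchored and 3-crossed, resp.
2-anchored and 2-crossed — that have no straight-line aligned drawing. -/
theorem pappus_single_edge_not_drawable :
    ExistsBadSingleEdge 0 4 ∧ ExistsBadSingleEdge 1 3 ∧ ExistsBadSingleEdge 2 2 := by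
  have h0 : (0 : ℝ) ∈ Icc 0 (1 / 10) := by norm_num
  have h1 : (1 / 10 : ℝ) ∈ Icc 0 (1 / 10) := by norm_num
  exact ⟨by simpa using PappusConfiguration.existsBadSingleEdge h1 h1,
    by simpa using PappusConfiguration.existsBadSingleEdge h0 h1,
    by simpa using PappusConfiguration.existsBadSingleEdge h0 h0⟩
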